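/- Let Q(ξ) = (ξ_1 ξ_2, ξ_1² − ξ_2²) be a pair of real quadratic forms on ℝ². Then for all exponents p, q ∈ [1,∞] with q > 4 and 1/p + 3/q < 1, there exists a constant C = C(p,q) such that ‖E^Q f‖_{L^q(ℝ^4)} ≤ C ‖f‖_{L^p([0,1]²)} for every measurable function f : [0,1]² → ℂ. -/

import Mathlib

open MeasureTheory
open scoped ENNReal

/-- The extension operator associated to the quadratic surface
`S_Q = {(ξ, Q ξ) : ξ ∈ [0,1]^d} ⊆ ℝ^{d+n}`. -/
noncomputable def extOp (d n : ℕ) (Q : (Fin d → ℝ) → Fin n → ℝ)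
    (f : (Fin d → ℝ) → ℂ) (x : Fin (d + n) → ℝ) : ℂ :=
  ∫ ξ in Set.Icc (0 : Fin d → ℝ) 1,
    Complex.exp (2 * (Real.pi : ℂ) * Complex.I *
      ((((∑ i : Fin d, x (Fin.castAdd n i) * ξ i) +
        ∑ j : Fin n, x (Fin.natAdd d j) * Q ξ j : ℝ)) : ℂ)) * f ξ

/-!
Write `E` for the extension operator. The square `(E f)²` is the Fourier transform of the image of
`f ⊗ f` under the map `(z, w) ↦ (z + w, Q z + Q w)`. For `Q = (ξ₁ξ₂, ξ₁² - ξ₂²)` the sum and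
`Q z + Q w` determine `Q (w - z)` by the parallelogram law, and `Q` determines its argument up to
sign (it is `z ↦ z²` on `ℂ`, up to a linear change of coordinates), so the map is injective where
`z₁ < w₁`. Its Jacobian `det (Q' w - Q' z)` has absolute value at least `|w₁ - z₁| |w₂ - z₂|`.

Let `1/r + 1/s = 1` and `q = 2s`. The Hausdorff–Young inequality followed by a change of variables
bounds `‖E f‖_q` by `∬ |f(z) f(w)|^r ∏ |w_i - z_i|^{-(r-1)}`. For `r - 1 < θ ≤ 1` the kernel is in
`L^{1/θ}` of the cube uniformly in either variable, so by Hölder this is controlled by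
`‖f‖_{rσ}` with `1/σ = 1 - θ/2`. As `θ` decreases to `r - 1`, the exponent `rσ` decreases to the
endpoint `1/p + 3/q = 1`; the remaining `p` follow by the nesting of the `L^p` norms on the cube.
-/

section Interpolation

variable {α β E F : Type*} [MeasurableSpace α] [MeasurableSpace β] {μ : Measure α} {ν : Measure β}
  [NormedAddCommGroup E] [NormedAddCommGroup F]

/-- A sublinear operator contracting `L¹` into `L^∞` and `L¹ ∩ L²` into `L²`. -/
structure IsL1L2Contraction (T : (α → E) → β → F) (μ : Measure α) (ν : Measure β) : Prop where
  aestronglyMeasurable {g : α → E} : Integrable g μ → AEStronglyMeasurable (T g) ν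
  norm_add_le {g h : α → E} : Integrable g μ → Integrable h μ →
    ∀ x, ‖T (g + h) x‖ ≤ ‖T g x‖ + ‖T h x‖
  enorm_le {g : α → E} : Integrable g μ → ∀ x, ‖T g x‖ₑ ≤ ∫⁻ y, ‖g y‖ₑ ∂μ
  eLpNorm_two_le {g : α → E} : Integrable g μ → MemLp g 2 μ → eLpNorm (T g) 2 ν ≤ eLpNorm g 2 μ

lemma setLIntegral_enorm_lt_norm_le {g : α → E} (hg : AEStronglyMeasurable g μ) {r s : ℝ}
    (hr : 1 ≤ r) (hs : 0 < s) :
    ∫⁻ y in {y | s < ‖g y‖}, ‖g y‖ₑ ∂μ ≤ ENNReal.ofReal (s ^ (1 - r)) * ∫⁻ y, ‖g y‖ₑ ^ r ∂μ := by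
  have hpointwise (y) (hy : s < ‖g y‖) : ‖g y‖ₑ ≤ ENNReal.ofReal (s ^ (1 - r)) * ‖g y‖ₑ ^ r := by
    have hpos : 0 < ‖g y‖ := hs.trans hy
    rw [← ofReal_norm, ENNReal.ofReal_rpow_of_pos hpos, ← ENNReal.ofReal_mul (by positivity)]
    apply ENNReal.ofReal_le_ofReal
    calc ‖g y‖ = ‖g y‖ ^ (1 - r) * ‖g y‖ ^ r := by rw [← Real.rpow_add hpos]; simp
      _ ≤ s ^ (1 - r) * ‖g y‖ ^ r := by
        gcongr ?_ * _
        exact Real.rpow_le_rpow_of_nonpos hs hy.le (by linarith)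
  calc ∫⁻ y in {y | s < ‖g y‖}, ‖g y‖ₑ ∂μ
      ≤ ∫⁻ y in {y | s < ‖g y‖}, ENNReal.ofReal (s ^ (1 - r)) * ‖g y‖ₑ ^ r ∂μ := by
        refine lintegral_mono_ae ?_
        filter_upwards [ae_restrict_mem₀ (nullMeasurableSet_lt aemeasurable_const
          hg.norm.aemeasurable)] using hpointwise
    _ ≤ ∫⁻ y, ENNReal.ofReal (s ^ (1 - r)) * ‖g y‖ₑ ^ r ∂μ := setLIntegral_le_lintegral _ _
    _ = _ := lintegral_const_mul' _ _ ENNReal.ofReal_ne_top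

lemma setLIntegral_Ioc_rpow {a T : ℝ} (ha : -1 < a) (hT : 0 ≤ T) :
    ∫⁻ t in Set.Ioc 0 T, ENNReal.ofReal (t ^ a) = ENNReal.ofReal (T ^ (a + 1) / (a + 1)) := by
  rw [← ofReal_integral_eq_lintegral_ofReal, ← intervalIntegral.integral_of_le hT,
    integral_rpow (Or.inl ha), Real.zero_rpow (by linarith), sub_zero]
  · exact (intervalIntegrable_iff_integrableOn_Ioc_of_le hT).1
      (intervalIntegral.intervalIntegrable_rpow' ha)
  · filter_upwards [ae_restrict_mem measurableSet_Ioc] with t ht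
    exact Real.rpow_nonneg ht.1.le _

lemma memLp_two_of_norm_le {g : α → E} (hg : Integrable g μ) {s : ℝ}
    (hs : ∀ y, ‖g y‖ ≤ s) : MemLp g 2 μ := by
  rw [memLp_two_iff_integrable_sq_norm hg.aestronglyMeasurable]
  simp_rw [pow_two]
  exact hg.norm.bdd_mul (c := s) hg.norm.aestronglyMeasurable (.of_forall (by simpa using hs))

lemma eLpNorm_indicator_two_sq {A : Set α} (hA : MeasurableSet A) {g : α → E} :
    eLpNorm (A.indicator g) 2 μ ^ 2 = ∫⁻ y in A, ‖g y‖ₑ ^ 2 ∂μ := by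
  rw [eLpNorm_indicator_eq_eLpNorm_restrict hA]
  simpa using eLpNorm_nnreal_pow_eq_lintegral (f := g) (μ := μ.restrict A)
    (two_ne_zero (α := NNReal))

lemma IsL1L2Contraction.meas_lt_norm_le {T : (α → E) → β → F} (hT : IsL1L2Contraction T μ ν)
    {g : α → E} (hgm : StronglyMeasurable g) (hg : Integrable g μ) {s t : ℝ} (hs : 0 ≤ s)
    (ht : 0 < t) (htail : ∫⁻ y in {y | s < ‖g y‖}, ‖g y‖ₑ ∂μ ≤ ENNReal.ofReal (t / 2)) :
    ν {x | t < ‖T g x‖} ≤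
      ENNReal.ofReal (4 / t ^ 2) * ∫⁻ y in {y | ‖g y‖ ≤ s}, ‖g y‖ₑ ^ 2 ∂μ := by
  set A : Set α := {y | ‖g y‖ ≤ s} with hA
  have hAm : MeasurableSet A := measurableSet_le hgm.norm.measurable measurable_const
  have hlow : Integrable (A.indicator g) μ := hg.indicator hAm
  have hhigh : Integrable (Aᶜ.indicator g) μ := hg.indicator hAm.compl
  have hlow_two : MemLp (A.indicator g) 2 μ := by
    refine memLp_two_of_norm_le hlow (s := s) fun y => ?_
    by_cases hy : y ∈ A
    · rwa [Set.indicator_of_mem hy]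
    · simpa [hy] using hs
  -- The high part contributes at most `t / 2` pointwise, so Chebyshev applies to the low part.
  have hhigh_le (x : β) : ‖T (Aᶜ.indicator g) x‖ ≤ t / 2 := by
    have hAc : Aᶜ = {y | s < ‖g y‖} := by ext; simp [hA]
    rw [← hAc, ← lintegral_indicator hAm.compl] at htail
    simp_rw [← enorm_indicator_eq_indicator_enorm] at htail
    rw [← ENNReal.ofReal_le_ofReal_iff (by positivity), ofReal_norm]
    exact (hT.enorm_le hhigh x).trans htail
  have hsub : {x | t < ‖T g x‖} ⊆ {x | ENNReal.ofReal (t / 2) ≤ ‖T (A.indicator g) x‖ₑ} := by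
    intro x (hx : t < ‖T g x‖)
    have h := hT.norm_add_le hlow hhigh x
    rw [Set.indicator_self_add_compl] at h
    rw [Set.mem_ofPred_eq, ← ofReal_norm]
    exact ENNReal.ofReal_le_ofReal (by linarith [hhigh_le x])
  calc ν {x | t < ‖T g x‖} ≤ ν {x | ENNReal.ofReal (t / 2) ≤ ‖T (A.indicator g) x‖ₑ} :=
        measure_mono hsub
    _ ≤ (ENNReal.ofReal (t / 2))⁻¹ ^ 2 * eLpNorm (T (A.indicator g)) 2 ν ^ 2 := by
        simpa using meas_ge_le_mul_pow_eLpNorm_enorm ν two_ne_zero ENNReal.ofNat_ne_top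
          (hT.aestronglyMeasurable hlow) (ε := ENNReal.ofReal (t / 2)) (by simpa using ht) (by simp)
    _ ≤ (ENNReal.ofReal (t / 2))⁻¹ ^ 2 * eLpNorm (A.indicator g) 2 μ ^ 2 := by
        gcongr
        exact hT.eLpNorm_two_le hlow hlow_two
    _ = ENNReal.ofReal (4 / t ^ 2) * ∫⁻ y in A, ‖g y‖ₑ ^ 2 ∂μ := by
        have hconst : (t / 2)⁻¹ ^ 2 = 4 / t ^ 2 := by field_simp; norm_num
        rw [← ENNReal.ofReal_inv_of_pos (by positivity), ← ENNReal.ofReal_pow (by positivity),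
          hconst, eLpNorm_indicator_two_sq hAm]

lemma lintegral_rpow_of_le_div_rpow {a c r Q : ℝ} (hrQ : r.HolderConjugate Q) (hQ : 2 < Q)
    (ha : 0 < a) (hc : 0 < c) :
    ∫⁻ t in Set.Ioi 0 ∩ {t | a ≤ (c / t) ^ (Q - 1)}, ENNReal.ofReal (t ^ (Q - 3)) =
      ENNReal.ofReal (c ^ (Q - 2) / (Q - 2) * a ^ (r - 2)) := by
  have hmul : (1 - r) * (Q - 1) = -1 := by linarith [hrQ.mul_eq_add]
  have hset : Set.Ioi 0 ∩ {t | a ≤ (c / t) ^ (Q - 1)} = Set.Ioc 0 (c * a ^ (1 - r)) := by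
    ext t
    refine and_congr_right fun (ht : 0 < t) => ?_
    have hroot : a = (a ^ (r - 1)) ^ (Q - 1) := by
      rw [← Real.rpow_mul ha.le, show (r - 1) * (Q - 1) = 1 by linarith, Real.rpow_one]
    rw [Set.mem_ofPred_eq, hroot, Real.rpow_le_rpow_iff (by positivity) (by positivity)
      (by linarith), ← hroot, le_div_iff₀ ht, ← neg_sub r 1, Real.rpow_neg ha.le,
      ← div_eq_mul_inv, le_div_iff₀ (by positivity), mul_comm]
  rw [hset, setLIntegral_Ioc_rpow (by linarith) (by positivity)]
  congr 1
  rw [show Q - 3 + 1 = Q - 2 by ring, Real.mul_rpow hc.le (by positivity), ← Real.rpow_mul ha.le,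
    show (1 - r) * (Q - 2) = r - 2 by linarith]
  ring

lemma lintegral_rpow_mul_sq_of_le_div_rpow {a c r Q : ℝ} (hrQ : r.HolderConjugate Q) (hQ : 2 < Q)
    (ha : 0 ≤ a) (hc : 0 < c) :
    ∫⁻ t in Set.Ioi 0 ∩ {t | a ≤ (c / t) ^ (Q - 1)},
        ENNReal.ofReal (t ^ (Q - 3)) * ENNReal.ofReal a ^ 2 =
      ENNReal.ofReal (c ^ (Q - 2) / (Q - 2)) * ENNReal.ofReal a ^ r := by
  rcases ha.eq_or_lt with rfl | hpos
  · simp [hrQ.pos]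
  have : 0 < Q - 2 := by linarith
  rw [lintegral_mul_const _ (by fun_prop), lintegral_rpow_of_le_div_rpow hrQ hQ hpos hc,
    ENNReal.ofReal_rpow_of_pos hpos, ← ENNReal.ofReal_pow ha, ← ENNReal.ofReal_mul (by positivity),
    ← ENNReal.ofReal_mul (by positivity), mul_assoc, ← Real.rpow_ofNat, ← Real.rpow_add hpos,
    sub_add_cancel]

lemma lintegral_rpow_mul_setLIntegral_norm_le [SFinite μ] {g : α → E} (hg : StronglyMeasurable g)
    {c r Q : ℝ} (hrQ : r.HolderConjugate Q) (hQ : 2 < Q) (hc : 0 < c) :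
    ∫⁻ t in Set.Ioi 0, ENNReal.ofReal (t ^ (Q - 3)) *
        ∫⁻ y in {y | ‖g y‖ ≤ (c / t) ^ (Q - 1)}, ‖g y‖ₑ ^ 2 ∂μ =
      ENNReal.ofReal (c ^ (Q - 2) / (Q - 2)) * ∫⁻ y, ‖g y‖ₑ ^ r ∂μ := by
  have hnorm : Measurable fun y => ‖g y‖ := hg.norm.measurable
  have _ : Measurable fun y => ‖g y‖ₑ := hg.enorm
  let S : Set (ℝ × α) := {z | ‖g z.2‖ ≤ (c / z.1) ^ (Q - 1)}
  have hS : MeasurableSet S := measurableSet_le (hnorm.comp measurable_snd) (by fun_prop)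
  let w : ℝ → ℝ≥0∞ := fun t => ENNReal.ofReal (t ^ (Q - 3))
  calc ∫⁻ t in Set.Ioi 0, w t * ∫⁻ y in {y | ‖g y‖ ≤ (c / t) ^ (Q - 1)}, ‖g y‖ₑ ^ 2 ∂μ
      = ∫⁻ t in Set.Ioi 0, ∫⁻ y, S.indicator (fun z => w z.1 * ‖g z.2‖ₑ ^ 2) (t, y) ∂μ := by
        congr 1 with t
        rw [← lintegral_const_mul _ (by fun_prop), ← lintegral_indicator
          (measurableSet_le hnorm measurable_const)]
        rfl
    _ = ∫⁻ y, (∫⁻ t in Set.Ioi 0, S.indicator (fun z => w z.1 * ‖g z.2‖ₑ ^ 2) (t, y)) ∂μ := by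
        refine lintegral_lintegral_swap (Measurable.aemeasurable ?_)
        exact Measurable.indicator (by fun_prop) hS
    _ = ∫⁻ y, ENNReal.ofReal (c ^ (Q - 2) / (Q - 2)) * ‖g y‖ₑ ^ r ∂μ := by
        congr 1 with y
        rw [← ofReal_norm, ← lintegral_rpow_mul_sq_of_le_div_rpow hrQ hQ (norm_nonneg (g y)) hc,
          Set.inter_comm,
          ← setLIntegral_indicator (measurableSet_le measurable_const (by fun_prop))]
        simp_rw [ofReal_norm]
        rfl
    _ = _ := lintegral_const_mul _ (by fun_prop)

lemma IsL1L2Contraction.meas_lt_norm_mul_rpow_le {T : (α → E) → β → F}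
    (hT : IsL1L2Contraction T μ ν) {r Q n t : ℝ} (hrQ : r.HolderConjugate Q) {g : α → E}
    (hgm : StronglyMeasurable g) (hg : Integrable g μ) (hn : 0 < n)
    (hgn : ∫⁻ y, ‖g y‖ₑ ^ r ∂μ = ENNReal.ofReal n) (ht : 0 < t) :
    ν {x | t < ‖T g x‖} * ENNReal.ofReal (t ^ (Q - 1)) ≤ ENNReal.ofReal 4 *
      (ENNReal.ofReal (t ^ (Q - 3)) *
        ∫⁻ y in {y | ‖g y‖ ≤ (2 * n / t) ^ (Q - 1)}, ‖g y‖ₑ ^ 2 ∂μ) := by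
  have htail : ∫⁻ y in {y | (2 * n / t) ^ (Q - 1) < ‖g y‖}, ‖g y‖ₑ ∂μ ≤
      ENNReal.ofReal (t / 2) := by
    have hpow : ((2 * n / t) ^ (Q - 1)) ^ (1 - r) = t / 2 / n := by
      rw [← Real.rpow_mul (by positivity), show (Q - 1) * (1 - r) = -1 by linarith [hrQ.mul_eq_add],
        Real.rpow_neg_one]
      field_simp
    have h := setLIntegral_enorm_lt_norm_le (μ := μ) hgm.aestronglyMeasurable hrQ.lt.le
      (show 0 < (2 * n / t) ^ (Q - 1) by positivity)
    rwa [hgn, hpow, ← ENNReal.ofReal_mul (by positivity), div_mul_cancel₀ _ hn.ne'] at h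
  have hpow : 4 / t ^ 2 * t ^ (Q - 1) = 4 * t ^ (Q - 3) := by
    rw [show Q - 1 = Q - 3 + 2 by ring, Real.rpow_add ht, Real.rpow_ofNat]
    field_simp
  rw [← mul_assoc, ← ENNReal.ofReal_mul (by positivity), ← hpow,
    ENNReal.ofReal_mul (by positivity), mul_right_comm]
  gcongr
  exact hT.meas_lt_norm_le hgm hg (by positivity) ht htail

lemma IsL1L2Contraction.lintegral_rpow_le_of_eq_ofReal [SFinite μ] {T : (α → E) → β → F}
    (hT : IsL1L2Contraction T μ ν) {r Q n : ℝ} (hrQ : r.HolderConjugate Q) (hQ : 2 < Q) {g : α → E}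
    (hgm : StronglyMeasurable g) (hg : Integrable g μ) (hn : 0 < n)
    (hgn : ∫⁻ y, ‖g y‖ₑ ^ r ∂μ = ENNReal.ofReal n) :
    ∫⁻ x, ‖T g x‖ₑ ^ Q ∂ν ≤ ENNReal.ofReal (Q * (4 * 2 ^ (Q - 2) / (Q - 2)) * n ^ (Q - 1)) := by
  have : 0 < Q - 2 := by linarith
  calc ∫⁻ x, ‖T g x‖ₑ ^ Q ∂ν = ∫⁻ x, ENNReal.ofReal (‖T g x‖ ^ Q) ∂ν := by
        simp_rw [← ENNReal.ofReal_rpow_of_nonneg (norm_nonneg _) (by linarith : 0 ≤ Q), ofReal_norm]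
    _ = ENNReal.ofReal Q *
          ∫⁻ t in Set.Ioi 0, ν {x | t < ‖T g x‖} * ENNReal.ofReal (t ^ (Q - 1)) :=
        lintegral_rpow_eq_lintegral_meas_lt_mul _ (.of_forall fun x => norm_nonneg _)
          (hT.aestronglyMeasurable hg).norm.aemeasurable (by linarith)
    _ ≤ ENNReal.ofReal Q * ∫⁻ t in Set.Ioi 0, ENNReal.ofReal 4 * (ENNReal.ofReal (t ^ (Q - 3)) *
          ∫⁻ y in {y | ‖g y‖ ≤ (2 * n / t) ^ (Q - 1)}, ‖g y‖ₑ ^ 2 ∂μ) := by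
        gcongr ENNReal.ofReal Q * ?_
        exact setLIntegral_mono' measurableSet_Ioi fun t ht =>
          hT.meas_lt_norm_mul_rpow_le hrQ hgm hg hn hgn ht
    _ = ENNReal.ofReal (Q * (4 * ((2 * n) ^ (Q - 2) / (Q - 2) * n))) := by
        rw [lintegral_const_mul' _ _ ENNReal.ofReal_ne_top,
          lintegral_rpow_mul_setLIntegral_norm_le hgm hrQ hQ (by positivity), hgn,
          ← ENNReal.ofReal_mul (by positivity), ← ENNReal.ofReal_mul (by positivity),
          ← ENNReal.ofReal_mul (by linarith)]
    _ = _ := by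
        rw [Real.mul_rpow zero_le_two hn.le, show Q - 1 = Q - 2 + 1 by ring,
          Real.rpow_add_one hn.ne']
        ring_nf

lemma IsL1L2Contraction.lintegral_rpow_le [SFinite μ] {T : (α → E) → β → F}
    (hT : IsL1L2Contraction T μ ν) {r Q : ℝ} (hrQ : r.HolderConjugate Q) (hQ : 2 < Q) {g : α → E}
    (hgm : StronglyMeasurable g) (hg : Integrable g μ) :
    ∫⁻ x, ‖T g x‖ₑ ^ Q ∂ν ≤
      ENNReal.ofReal (Q * (4 * 2 ^ (Q - 2) / (Q - 2))) * (∫⁻ y, ‖g y‖ₑ ^ r ∂μ) ^ (Q - 1) := by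
  have : 0 < Q - 2 := by linarith
  have hQ1 : 0 < Q - 1 := by linarith
  have hC : 0 < Q * (4 * 2 ^ (Q - 2) / (Q - 2)) := by positivity
  have henorm : AEMeasurable (fun y => ‖g y‖ₑ ^ r) μ := by
    have := hgm.enorm
    fun_prop
  rcases eq_or_ne (∫⁻ y, ‖g y‖ₑ ^ r ∂μ) ⊤ with htop | htop
  · simp [htop, hQ1, hC.not_ge, ENNReal.mul_top]
  rcases eq_or_ne (∫⁻ y, ‖g y‖ₑ ^ r ∂μ) 0 with hzero | hzero
  · have hg0 : ∫⁻ y, ‖g y‖ₑ ∂μ = 0 := by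
      rw [lintegral_eq_zero_iff' henorm] at hzero
      rw [lintegral_eq_zero_iff' hgm.enorm.aemeasurable]
      filter_upwards [hzero] with y hy
      simpa [hrQ.pos, hrQ.pos.not_gt] using hy
    have hTg (x : β) : ‖T g x‖ₑ = 0 := by simpa [hg0] using hT.enorm_le hg x
    simp [hTg, show 0 < Q by linarith]
  have hn : 0 < (∫⁻ y, ‖g y‖ₑ ^ r ∂μ).toReal := ENNReal.toReal_pos hzero htop
  have h := hT.lintegral_rpow_le_of_eq_ofReal hrQ hQ hgm hg hn (ENNReal.ofReal_toReal htop).symm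
  rwa [ENNReal.ofReal_mul hC.le, ← ENNReal.ofReal_rpow_of_pos hn, ENNReal.ofReal_toReal htop] at h

end Interpolation

section HausdorffYoung

open scoped FourierTransform SchwartzMap ContDiff

variable {V : Type*} [NormedAddCommGroup V] [InnerProductSpace ℝ V]

lemma continuous_neg_innerₗ : Continuous fun z : V × V => (-innerₗ V) z.1 z.2 := by
  simp only [LinearMap.neg_apply, innerₗ_apply_apply]
  fun_prop

variable [FiniteDimensional ℝ V] [MeasurableSpace V] [BorelSpace V]

lemma fourierInv_add {g h : V → ℂ} (hg : Integrable g) (hh : Integrable h) :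
    𝓕⁻ (g + h) = 𝓕⁻ g + 𝓕⁻ h :=
  VectorFourier.fourierIntegral_add Real.continuous_fourierChar continuous_neg_innerₗ hg hh

lemma continuous_fourierInv {g : V → ℂ} (hg : Integrable g) : Continuous (𝓕⁻ g) :=
  VectorFourier.fourierIntegral_continuous Real.continuous_fourierChar continuous_neg_innerₗ hg

lemma integral_fourierInv_mul_eq {φ g : V → ℂ} (hφ : Integrable φ) (hg : Integrable g) :
    ∫ x, 𝓕⁻ φ x * g x = ∫ x, φ x * 𝓕⁻ g x := by
  have hflip : (-innerₗ V).flip = -innerₗ V := by ext; simp [real_inner_comm]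
  have h := VectorFourier.integral_fourierIntegral_smul_eq_flip (L := -innerₗ V) (μ := volume)
    (ν := volume) (e := Real.fourierChar) Real.continuous_fourierChar continuous_neg_innerₗ hφ hg
  rwa [hflip] at h

lemma fourierInv_ae_eq_fourierInv_toLp {g : V → ℂ} (hg : Integrable g) (hg2 : MemLp g 2) :
    𝓕⁻ g =ᵐ[volume] (𝓕⁻ (hg2.toLp g) : Lp (α := V) ℂ 2 volume) := by
  refine ae_eq_of_integral_contDiff_smul_eq (continuous_fourierInv hg).locallyIntegrable
    ((Lp.memLp _).locallyIntegrable (by norm_num)) fun φ hφ hsupp => ?_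
  have hsuppC : HasCompactSupport (Complex.ofRealCLM ∘ φ) := hsupp.comp_left rfl
  have hφC : ContDiff ℝ ∞ (Complex.ofRealCLM ∘ φ) := by fun_prop
  let ψ : 𝓢(V, ℂ) := hsuppC.toSchwartzMap hφC
  have hψ (x : V) : ψ x = φ x := rfl
  calc ∫ x, φ x • 𝓕⁻ g x = ∫ x, ψ x * 𝓕⁻ g x := by simp [hψ]
    _ = ∫ x, (𝓕⁻ ψ) x * g x := by
      rw [SchwartzMap.fourierInv_coe, integral_fourierInv_mul_eq ψ.integrable hg]
    _ = ∫ x, (𝓕⁻ ψ) x • hg2.toLp g x := by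
      refine integral_congr_ae ?_
      filter_upwards [hg2.coeFn_toLp] with x hx
      rw [hx, smul_eq_mul]
    _ = ((𝓕⁻ (hg2.toLp g) : Lp (α := V) ℂ 2 volume) : 𝓢'(V, ℂ)) ψ := by
      rw [← Lp.fourierInv_toTemperedDistribution_eq, TemperedDistribution.fourierInv_apply,
        Lp.toTemperedDistribution_apply]
    _ = ∫ x, φ x • (𝓕⁻ (hg2.toLp g) : Lp (α := V) ℂ 2 volume) x := by
      simp [Lp.toTemperedDistribution_apply, hψ]

lemma eLpNorm_fourierInv_two {g : V → ℂ} (hg : Integrable g) (hg2 : MemLp g 2) :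
    eLpNorm (𝓕⁻ g) 2 volume = eLpNorm g 2 volume := by
  have hisom : ‖(𝓕⁻ (hg2.toLp g) : Lp (α := V) ℂ 2 volume)‖ₑ = ‖hg2.toLp g‖ₑ := by
    rw [← ofReal_norm, ← ofReal_norm]
    exact congrArg _ ((Lp.fourierTransformₗᵢ V ℂ).symm.norm_map _)
  rw [eLpNorm_congr_ae (fourierInv_ae_eq_fourierInv_toLp hg hg2), ← Lp.enorm_def, hisom,
    Lp.enorm_toLp]

lemma isL1L2Contraction_fourierInv :
    IsL1L2Contraction (𝓕⁻ : (V → ℂ) → V → ℂ) volume volume where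
  aestronglyMeasurable hg := (continuous_fourierInv hg).aestronglyMeasurable
  norm_add_le hg hh x := by
    rw [fourierInv_add hg hh]
    exact norm_add_le _ _
  enorm_le _ x := by
    refine (enorm_integral_le_lintegral_enorm _).trans_eq ?_
    simp_rw [← ofReal_norm, Circle.norm_smul]
  eLpNorm_two_le hg hg2 := (eLpNorm_fourierInv_two hg hg2).le

theorem lintegral_enorm_fourierInv_rpow_le {r Q : ℝ} (hrQ : r.HolderConjugate Q) (hQ : 2 < Q)
    {g : V → ℂ} (hg : Integrable g) :
    ∫⁻ x, ‖𝓕⁻ g x‖ₑ ^ Q ≤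
      ENNReal.ofReal (Q * (4 * 2 ^ (Q - 2) / (Q - 2))) * (∫⁻ y, ‖g y‖ₑ ^ r) ^ (Q - 1) := by
  have hmk := hg.aestronglyMeasurable.ae_eq_mk
  have hr : ∫⁻ y, ‖g y‖ₑ ^ r = ∫⁻ y, ‖hg.aestronglyMeasurable.mk g y‖ₑ ^ r :=
    lintegral_congr_ae (hmk.fun_comp fun z => ‖z‖ₑ ^ r)
  have hinv : 𝓕⁻ g = 𝓕⁻ (hg.aestronglyMeasurable.mk g) := funext (Real.fourierInv_congr_ae hmk)
  rw [hinv, hr]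
  exact isL1L2Contraction_fourierInv.lintegral_rpow_le hrQ hQ
    hg.aestronglyMeasurable.stronglyMeasurable_mk (hg.congr hmk)

end HausdorffYoung

section Phase

variable {d n : ℕ}

/-- The character of `ℝ^{d+n}` with frequency `y ∈ ℝ^d × ℝ^n`, evaluated at `x`. -/
noncomputable def phase (x : Fin (d + n) → ℝ) (y : (Fin d → ℝ) × (Fin n → ℝ)) : ℂ :=
  Complex.exp (2 * (Real.pi : ℂ) * Complex.I *
    (((∑ i : Fin d, x (Fin.castAdd n i) * y.1 i) +
      ∑ j : Fin n, x (Fin.natAdd d j) * y.2 j : ℝ) : ℂ))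

lemma phase_add (x : Fin (d + n) → ℝ) (y y' : (Fin d → ℝ) × (Fin n → ℝ)) :
    phase x (y + y') = phase x y * phase x y' := by
  simp only [phase, ← Complex.exp_add, Prod.fst_add, Prod.snd_add, Pi.add_apply, mul_add,
    Finset.sum_add_distrib]
  push_cast
  ring_nf

lemma enorm_phase (x : Fin (d + n) → ℝ) (y : (Fin d → ℝ) × (Fin n → ℝ)) :
    ‖phase x y‖ₑ = 1 := by
  rw [phase, mul_right_comm, ← ofReal_norm, ← ENNReal.ofReal_one]
  exact_mod_cast congrArg ENNReal.ofReal (Complex.norm_exp_ofReal_mul_I _)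

lemma continuous_phase (x : Fin (d + n) → ℝ) : Continuous (phase x) := by
  unfold phase
  fun_prop

/-- Splitting off the first `d` coordinates of `ℝ^{d+n}`. -/
noncomputable def splitCoords (d n : ℕ) :
    EuclideanSpace ℝ (Fin (d + n)) ≃ᵐ (Fin d → ℝ) × (Fin n → ℝ) :=
  ((MeasurableEquiv.toLp 2 _).symm.trans
    (MeasurableEquiv.piCongrLeft (fun _ => ℝ) finSumFinEquiv).symm).trans
      (MeasurableEquiv.sumPiEquivProdPi fun _ => ℝ)

lemma splitCoords_apply (v : EuclideanSpace ℝ (Fin (d + n))) :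
    splitCoords d n v = (fun i => v (Fin.castAdd n i), fun j => v (Fin.natAdd d j)) :=
  rfl

lemma measurePreserving_splitCoords :
    MeasurePreserving (splitCoords d n) volume volume :=
  ((PiLp.volume_preserving_ofLp _).trans
    (volume_measurePreserving_piCongrLeft (fun _ => ℝ) finSumFinEquiv).symm).trans
      (volume_measurePreserving_sumPiEquivProdPi fun _ => ℝ)

open scoped FourierTransform in
lemma fourierInv_comp_splitCoords (g : (Fin d → ℝ) × (Fin n → ℝ) → ℂ) (x : Fin (d + n) → ℝ) :
    𝓕⁻ (g ∘ splitCoords d n) (WithLp.toLp 2 x) = ∫ y, phase x y * g y := by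
  rw [Real.fourierInv_eq',
    ← measurePreserving_splitCoords.integral_comp (splitCoords d n).measurableEmbedding]
  congr with v
  simp only [phase, splitCoords_apply, ← Fin.sum_univ_add (fun k => x k * v k), PiLp.inner_apply,
    RCLike.inner_apply, conj_trivial, smul_eq_mul, Function.comp_apply]
  push_cast
  ring_nf

theorem lintegral_enorm_integral_phase_mul_rpow_le {r Q : ℝ} (hrQ : r.HolderConjugate Q)
    (hQ : 2 < Q) {g : (Fin d → ℝ) × (Fin n → ℝ) → ℂ} (hg : Integrable g) :
    ∫⁻ x : Fin (d + n) → ℝ, ‖∫ y, phase x y * g y‖ₑ ^ Q ≤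
      ENNReal.ofReal (Q * (4 * 2 ^ (Q - 2) / (Q - 2))) * (∫⁻ y, ‖g y‖ₑ ^ r) ^ (Q - 1) := by
  have hmp := measurePreserving_splitCoords (d := d) (n := n)
  have := lintegral_enorm_fourierInv_rpow_le hrQ hQ (hmp.integrable_comp_of_integrable hg)
  rw [← (PiLp.volume_preserving_toLp _).lintegral_comp_emb
    (MeasurableEquiv.toLp 2 _).measurableEmbedding] at this
  simpa only [fourierInv_comp_splitCoords, Function.comp_apply,
    hmp.lintegral_comp_emb (splitCoords d n).measurableEmbedding (fun y => ‖g y‖ₑ ^ r)] using this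

end Phase

section ChangeOfVariables

variable {E : Type*} [NormedAddCommGroup E] [NormedSpace ℝ E] {Φ : E → E}
  {Φ' : E → E →L[ℝ] E} {S : Set E} {F : E → ℂ}

/-- The density of the image under `Φ` of the complex measure with density `F` on `S`, for `Φ`
injective on `S` with derivative `Φ'`. -/
noncomputable def imageDensity (Φ : E → E) (Φ' : E → E →L[ℝ] E) (S : Set E) (F : E → ℂ) : E → ℂ :=
  (Φ '' S).indicator fun v =>
    |(Φ' (Function.invFunOn Φ S v)).det|⁻¹ • F (Function.invFunOn Φ S v)

lemma imageDensity_apply (hΦ : S.InjOn Φ) {y : E} (hy : y ∈ S) :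
    imageDensity Φ Φ' S F (Φ y) = |(Φ' y).det|⁻¹ • F y := by
  rw [imageDensity, Set.indicator_of_mem (Set.mem_image_of_mem Φ hy), hΦ.leftInvOn_invFunOn hy]

variable [MeasurableSpace E] {μ : Measure E}

lemma abs_det_smul_imageDensity (hS : MeasurableSet S) (hΦ : S.InjOn Φ)
    (hdet : ∀ᵐ y ∂μ.restrict S, (Φ' y).det ≠ 0) :
    ∀ᵐ y ∂μ.restrict S, |(Φ' y).det| • imageDensity Φ Φ' S F (Φ y) = F y := by
  filter_upwards [hdet, ae_restrict_mem hS] with y hy hyS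
  rw [imageDensity_apply hΦ hyS, smul_inv_smul₀ (abs_ne_zero.2 hy)]

variable [BorelSpace E] [FiniteDimensional ℝ E] [μ.IsAddHaarMeasure]

lemma integrable_imageDensity (hS : MeasurableSet S)
    (hΦ' : ∀ y ∈ S, HasFDerivWithinAt Φ (Φ' y) S y) (hΦ : S.InjOn Φ)
    (hdet : ∀ᵐ y ∂μ.restrict S, (Φ' y).det ≠ 0) (hF : IntegrableOn F S μ) :
    Integrable (imageDensity Φ Φ' S F) μ := by
  have : IntegrableOn (imageDensity Φ Φ' S F) (Φ '' S) μ :=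
    (integrableOn_image_iff_integrableOn_abs_det_fderiv_smul μ hS hΦ' hΦ _).2
      (hF.congr (by filter_upwards [abs_det_smul_imageDensity hS hΦ hdet] with y hy using hy.symm))
  exact this.integrable_of_forall_notMem_eq_zero fun v hv => Set.indicator_of_notMem hv _

lemma integral_mul_imageDensity (hS : MeasurableSet S)
    (hΦ' : ∀ y ∈ S, HasFDerivWithinAt Φ (Φ' y) S y) (hΦ : S.InjOn Φ)
    (hdet : ∀ᵐ y ∂μ.restrict S, (Φ' y).det ≠ 0) (k : E → ℂ) :
    ∫ v, k v * imageDensity Φ Φ' S F v ∂μ = ∫ y in S, k (Φ y) * F y ∂μ := by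
  rw [← setIntegral_eq_integral_of_forall_compl_eq_zero (s := Φ '' S) fun v hv => by
      rw [imageDensity, Set.indicator_of_notMem hv, mul_zero],
    integral_image_eq_integral_abs_det_fderiv_smul μ hS hΦ' hΦ]
  refine integral_congr_ae ?_
  filter_upwards [abs_det_smul_imageDensity (F := F) hS hΦ hdet] with y hy
  rw [← mul_smul_comm, hy]

lemma lintegral_enorm_imageDensity_rpow (hS : MeasurableSet S)
    (hΦ' : ∀ y ∈ S, HasFDerivWithinAt Φ (Φ' y) S y) (hΦ : S.InjOn Φ)
    (hdet : ∀ᵐ y ∂μ.restrict S, (Φ' y).det ≠ 0) {r : ℝ} (hr : 0 < r) :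
    ∫⁻ v, ‖imageDensity Φ Φ' S F v‖ₑ ^ r ∂μ =
      ∫⁻ y in S, ENNReal.ofReal |(Φ' y).det| ^ (1 - r) * ‖F y‖ₑ ^ r ∂μ := by
  have hsupp : (fun v => ‖imageDensity Φ Φ' S F v‖ₑ ^ r).support ⊆ Φ '' S := by
    refine Function.support_subset_iff'.2 fun v hv => ?_
    rw [imageDensity, Set.indicator_of_notMem hv, enorm_zero, ENNReal.zero_rpow_of_pos hr]
  rw [← setLIntegral_eq_of_support_subset hsupp,
    lintegral_image_eq_lintegral_abs_det_fderiv_mul μ hS hΦ' hΦ]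
  refine lintegral_congr_ae ?_
  filter_upwards [hdet, ae_restrict_mem hS] with y hy hyS
  rw [imageDensity_apply hΦ hyS, enorm_smul, enorm_inv (abs_ne_zero.2 hy), Real.enorm_abs,
    ← Real.enorm_eq_ofReal_abs, ENNReal.mul_rpow_of_nonneg _ _ hr.le, ← mul_assoc,
    ENNReal.inv_rpow, ← ENNReal.rpow_neg, sub_eq_add_neg, ENNReal.rpow_add _ _ ?_ ?_,
    ENNReal.rpow_one]
  · simpa using hy
  · exact enorm_ne_top

theorem lintegral_enorm_setIntegral_phase_comp_mul_rpow_le {d n : ℕ} {r Q : ℝ}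
    (hrQ : r.HolderConjugate Q) (hQ : 2 < Q)
    {Φ : (Fin d → ℝ) × (Fin n → ℝ) → (Fin d → ℝ) × (Fin n → ℝ)} {Φ' : _ → _ →L[ℝ] _}
    {S : Set ((Fin d → ℝ) × (Fin n → ℝ))} (hS : MeasurableSet S)
    (hΦ' : ∀ y ∈ S, HasFDerivWithinAt Φ (Φ' y) S y) (hΦ : S.InjOn Φ)
    (hdet : ∀ᵐ y ∂volume.restrict S, (Φ' y).det ≠ 0)
    {F : (Fin d → ℝ) × (Fin n → ℝ) → ℂ} (hF : IntegrableOn F S) :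
    ∫⁻ x : Fin (d + n) → ℝ, ‖∫ y in S, phase x (Φ y) * F y‖ₑ ^ Q ≤
      ENNReal.ofReal (Q * (4 * 2 ^ (Q - 2) / (Q - 2))) *
        (∫⁻ y in S, ENNReal.ofReal |(Φ' y).det| ^ (1 - r) * ‖F y‖ₑ ^ r) ^ (Q - 1) := by
  have : (volume : Measure ((Fin d → ℝ) × (Fin n → ℝ))).IsAddHaarMeasure :=
    Measure.prod.instIsAddHaarMeasure volume volume
  rw [← lintegral_enorm_imageDensity_rpow hS hΦ' hΦ hdet hrQ.pos]
  simp_rw [← integral_mul_imageDensity hS hΦ' hΦ hdet]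
  exact lintegral_enorm_integral_phase_mul_rpow_le hrQ hQ
    (integrable_imageDensity hS hΦ' hΦ hdet hF)

end ChangeOfVariables

section Bilinear

variable {X Y : Type*} [MeasurableSpace X] [MeasurableSpace Y] {μ : Measure X} {ν : Measure Y}
  {u : X → ℝ≥0∞} {v : Y → ℝ≥0∞} {k : X × Y → ℝ≥0∞} {K : ℝ≥0∞}

lemma lintegral_comp_fst_mul_le [SFinite ν] (hu : AEMeasurable u μ) (hk : Measurable k)
    (hK : ∀ᵐ x ∂μ, ∫⁻ y, k (x, y) ∂ν ≤ K) :
    ∫⁻ p, u p.1 * k p ∂(μ.prod ν) ≤ (∫⁻ x, u x ∂μ) * K := by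
  calc ∫⁻ p, u p.1 * k p ∂(μ.prod ν)
      = ∫⁻ x, u x * ∫⁻ y, k (x, y) ∂ν ∂μ := by
        rw [lintegral_prod (fun p => u p.1 * k p) (hu.comp_fst.mul hk.aemeasurable)]
        exact lintegral_congr fun x => lintegral_const_mul (u x) (hk.comp measurable_prodMk_left)
    _ ≤ ∫⁻ x, u x * K ∂μ := by
        refine lintegral_mono_ae ?_
        filter_upwards [hK] with x hx using mul_le_mul_right hx _
    _ = (∫⁻ x, u x ∂μ) * K := lintegral_mul_const'' _ hu

lemma lintegral_comp_snd_mul_le [SFinite μ] [SFinite ν] (hv : AEMeasurable v ν) (hk : Measurable k)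
    (hK : ∀ᵐ y ∂ν, ∫⁻ x, k (x, y) ∂μ ≤ K) :
    ∫⁻ p, v p.2 * k p ∂(μ.prod ν) ≤ (∫⁻ y, v y ∂ν) * K := by
  rw [← lintegral_prod_swap]
  exact lintegral_comp_fst_mul_le hv (hk.comp measurable_swap) hK

lemma lintegral_rpow_mul_rpow_mul_rpow_le {f g h : X → ℝ≥0∞} (hf : AEMeasurable f μ)
    (hg : AEMeasurable g μ) (hh : AEMeasurable h μ) {a b c : ℝ} (ha : 0 ≤ a) (hb : 0 ≤ b)
    (hc : 0 ≤ c) (habc : a + b + c = 1) :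
    ∫⁻ x, f x ^ a * g x ^ b * h x ^ c ∂μ ≤
      (∫⁻ x, f x ∂μ) ^ a * (∫⁻ x, g x ∂μ) ^ b * (∫⁻ x, h x ∂μ) ^ c := by
  simpa [Fin.prod_univ_three] using ENNReal.lintegral_prod_norm_pow_le (μ := μ) Finset.univ
    (f := ![f, g, h]) (p := ![a, b, c]) (by simp [Fin.forall_fin_succ, hf, hg, hh])
    (by simpa [Fin.sum_univ_three]) (by simp [Fin.forall_fin_succ, ha, hb, hc])

theorem lintegral_mul_mul_kernel_le [SFinite μ] [SFinite ν] (hu : AEMeasurable u μ)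
    (hv : AEMeasurable v ν) (hk : Measurable k) {θ σ : ℝ} (hθ : 0 < θ) (hθ1 : θ ≤ 1)
    (hσ : σ * (1 - θ / 2) = 1) (hK : ∀ᵐ x ∂μ, ∫⁻ y, k (x, y) ^ (1 / θ) ∂ν ≤ K)
    (hK' : ∀ᵐ y ∂ν, ∫⁻ x, k (x, y) ^ (1 / θ) ∂μ ≤ K) :
    ∫⁻ p, u p.1 * v p.2 * k p ∂(μ.prod ν) ≤
      K ^ θ * ((∫⁻ x, u x ^ σ ∂μ) * ∫⁻ y, v y ^ σ ∂ν) ^ (1 - θ / 2) := by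
  have hθ2 : 0 ≤ θ / 2 := by linarith
  have hθ3 : 0 ≤ 1 - θ := by linarith
  have hsplit (a : ℝ≥0∞) : a ^ (1 - θ) * a ^ (θ / 2) = a ^ (1 - θ / 2) := by
    rw [← ENNReal.rpow_add_of_nonneg _ _ hθ3 hθ2]
    ring_nf
  have hhalf (a : ℝ≥0∞) : a ^ (θ / 2) * a ^ (θ / 2) = a ^ θ := by
    rw [← ENNReal.rpow_add_of_nonneg _ _ hθ2 hθ2, add_halves]
  have hkθ : Measurable fun p => k p ^ (1 / θ) := by fun_prop
  have hum := (hu.pow_const σ).comp_fst (ν := ν)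
  have hvm := (hv.pow_const σ).comp_snd (μ := μ)
  calc ∫⁻ p, u p.1 * v p.2 * k p ∂(μ.prod ν)
      = ∫⁻ p, (u p.1 ^ σ * v p.2 ^ σ) ^ (1 - θ) * (u p.1 ^ σ * k p ^ (1 / θ)) ^ (θ / 2) *
          (v p.2 ^ σ * k p ^ (1 / θ)) ^ (θ / 2) ∂(μ.prod ν) := by
        refine lintegral_congr fun p => ?_
        simp only [ENNReal.mul_rpow_of_nonneg _ _ hθ3, ENNReal.mul_rpow_of_nonneg _ _ hθ2]
        calc u p.1 * v p.2 * k p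
            = (u p.1 ^ σ) ^ (1 - θ / 2) * (v p.2 ^ σ) ^ (1 - θ / 2) * (k p ^ (1 / θ)) ^ θ := by
              simp only [← ENNReal.rpow_mul, hσ, one_div_mul_cancel hθ.ne', ENNReal.rpow_one]
          _ = _ := by
              rw [← hsplit, ← hsplit, ← hhalf]
              ring
    _ ≤ _ := lintegral_rpow_mul_rpow_mul_rpow_le (hum.fun_mul hvm) (hum.fun_mul hkθ.aemeasurable)
        (hvm.fun_mul hkθ.aemeasurable) hθ3 hθ2 hθ2 (by ring)
    _ ≤ ((∫⁻ x, u x ^ σ ∂μ) * ∫⁻ y, v y ^ σ ∂ν) ^ (1 - θ) *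
          ((∫⁻ x, u x ^ σ ∂μ) * K) ^ (θ / 2) * ((∫⁻ y, v y ^ σ ∂ν) * K) ^ (θ / 2) := by
        rw [lintegral_prod_mul (hu.pow_const σ) (hv.pow_const σ)]
        gcongr
        · exact lintegral_comp_fst_mul_le (hu.pow_const σ) hkθ hK
        · exact lintegral_comp_snd_mul_le (hv.pow_const σ) hkθ hK'
    _ = K ^ θ * ((∫⁻ x, u x ^ σ ∂μ) * ∫⁻ y, v y ^ σ ∂ν) ^ (1 - θ / 2) := by
        rw [← hsplit, ← hhalf]
        simp only [ENNReal.mul_rpow_of_nonneg _ _ hθ2]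
        ring

end Bilinear

section Kernel

lemma setLIntegral_Icc_abs_sub_rpow_le {β : ℝ} (hβ : β < 1) {z : ℝ} (hz : z ∈ Set.Icc (0 : ℝ) 1) :
    ∫⁻ w in Set.Icc (0 : ℝ) 1, ENNReal.ofReal |w - z| ^ (-β) ≤ ENNReal.ofReal (2 / (1 - β)) := by
  set φ : ℝ → ℝ≥0∞ := (Set.Ioc 0 1).indicator fun t => ENNReal.ofReal (t ^ (-β))
  have hφm : Measurable φ := Measurable.indicator (by fun_prop) measurableSet_Ioc
  have hφi : ∫⁻ t, φ t = ENNReal.ofReal (1 / (1 - β)) := by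
    rw [lintegral_indicator measurableSet_Ioc, setLIntegral_Ioc_rpow (by linarith) zero_le_one,
      Real.one_rpow, neg_add_eq_sub]
  have hpointwise {w : ℝ} (hw : w ∈ Set.Icc (0 : ℝ) 1) (hwz : w ≠ z) :
      ENNReal.ofReal |w - z| ^ (-β) ≤ φ (w - z) + φ (z - w) := by
    rw [ENNReal.ofReal_rpow_of_pos (abs_pos.2 (sub_ne_zero.2 hwz))]
    rcases lt_or_gt_of_ne hwz with h | h
    · rw [abs_sub_comm, abs_of_pos (sub_pos.2 h)]
      have : z - w ∈ Set.Ioc (0 : ℝ) 1 := ⟨by linarith, by linarith [hz.2, hw.1]⟩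
      exact le_add_left (Set.indicator_of_mem this fun t => ENNReal.ofReal (t ^ (-β))).ge
    · rw [abs_of_pos (sub_pos.2 h)]
      have : w - z ∈ Set.Ioc (0 : ℝ) 1 := ⟨by linarith, by linarith [hz.1, hw.2]⟩
      exact le_add_right (Set.indicator_of_mem this fun t => ENNReal.ofReal (t ^ (-β))).ge
  calc ∫⁻ w in Set.Icc (0 : ℝ) 1, ENNReal.ofReal |w - z| ^ (-β)
      ≤ ∫⁻ w in Set.Icc (0 : ℝ) 1, φ (w - z) + φ (z - w) := by
        refine lintegral_mono_ae ?_
        filter_upwards [ae_restrict_mem measurableSet_Icc, Measure.ae_ne _ z] with w hw hwz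
          using hpointwise hw hwz
    _ ≤ ∫⁻ w, φ (w - z) + φ (z - w) := setLIntegral_le_lintegral _ _
    _ = ENNReal.ofReal (2 / (1 - β)) := by
        have : 0 ≤ 1 / (1 - β) := one_div_nonneg.2 (by linarith)
        rw [lintegral_add_left (by fun_prop), lintegral_sub_right_eq_self φ z,
          lintegral_sub_left_eq_self φ z, hφi, ← ENNReal.ofReal_add this this]
        ring_nf

lemma lintegral_fin_prod_eq_prod {d : ℕ} {E : Fin d → Type*} [∀ i, MeasurableSpace (E i)]
    {ν : ∀ i, Measure (E i)} [∀ i, SigmaFinite (ν i)] {g : ∀ i, E i → ℝ≥0∞}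
    (hg : ∀ i, Measurable (g i)) :
    ∫⁻ w, ∏ i, g i (w i) ∂Measure.pi ν = ∏ i, ∫⁻ t, g i t ∂ν i := by
  induction d with
  | zero => simp
  | succ d ih =>
    rw [← (measurePreserving_piFinSuccAbove ν 0).symm.lintegral_comp_emb
      (MeasurableEquiv.measurableEmbedding _)]
    simp only [Fin.prod_univ_succ, ← ih fun i => hg i.succ]
    exact lintegral_prod_mul (hg 0).aemeasurable
      (Finset.measurable_prod _ fun i _ => (hg _).comp (measurable_pi_apply i)).aemeasurable

lemma setLIntegral_Icc_prod_abs_sub_rpow_le {d : ℕ} {β : ℝ} (hβ : β < 1) {z : Fin d → ℝ}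
    (hz : z ∈ Set.Icc 0 1) :
    ∫⁻ w in Set.Icc (0 : Fin d → ℝ) 1, ∏ i, ENNReal.ofReal |w i - z i| ^ (-β) ≤
      ENNReal.ofReal (2 / (1 - β)) ^ d := by
  rw [volume_pi, ← Set.pi_univ_Icc, Measure.restrict_pi_pi,
    lintegral_fin_prod_eq_prod (g := fun i t => ENNReal.ofReal |t - z i| ^ (-β)) (by fun_prop)]
  exact (Finset.prod_le_pow_card _ _ _ fun i _ =>
    setLIntegral_Icc_abs_sub_rpow_le hβ ⟨hz.1 i, hz.2 i⟩).trans_eq (by simp)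

end Kernel

section SquaredExtension

lemma integral_prod_eq_two_nsmul_setIntegral {X E : Type*} [MeasurableSpace X]
    [NormedAddCommGroup E] [NormedSpace ℝ E] {μ : Measure X} [SFinite μ] {S : Set (X × X)}
    (hS : MeasurableSet S) (hswap : ∀ᵐ p ∂μ.prod μ, p ∉ S ↔ p.swap ∈ S) {H : X × X → E}
    (hH : Integrable H (μ.prod μ)) (hsymm : ∀ p, H p.swap = H p) :
    ∫ p, H p ∂(μ.prod μ) = 2 • ∫ p in S, H p ∂(μ.prod μ) := by
  have : ∫ p in Sᶜ, H p ∂(μ.prod μ) = ∫ p in S, H p ∂(μ.prod μ) := by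
    rw [← Measure.measurePreserving_swap.setIntegral_preimage_emb
      MeasurableEquiv.prodComm.measurableEmbedding H S]
    simp only [hsymm]
    exact setIntegral_congr_set (Filter.eventuallyEq_set.2 hswap)
  rw [← integral_add_compl hS hH, this, two_nsmul]

variable {d n : ℕ} {Q : (Fin d → ℝ) → Fin n → ℝ} {f : (Fin d → ℝ) → ℂ}

/-- Lebesgue measure on the unit cube `[0,1]^d`. -/
noncomputable abbrev unitCubeMeasure (d : ℕ) : Measure (Fin d → ℝ) :=
  volume.restrict (Set.Icc 0 1)

instance : IsProbabilityMeasure (unitCubeMeasure d) :=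
  ⟨by simp [unitCubeMeasure, Real.volume_Icc_pi]⟩

lemma ae_apply_ne (i : Fin d) :
    ∀ᵐ p ∂(unitCubeMeasure d).prod (unitCubeMeasure d), p.1 i ≠ p.2 i := by
  rw [Measure.prod_restrict]
  have hmeas : MeasurableSet {p : (Fin d → ℝ) × (Fin d → ℝ) | p.1 i ≠ p.2 i} :=
    (measurableSet_eq_fun (by fun_prop) (by fun_prop)).compl
  exact ae_restrict_of_ae <| (Measure.ae_prod_iff_ae_ae hmeas).2 <|
    .of_forall fun z => (Measure.ae_eval_ne _ i (z i)).mono fun _ => Ne.symm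

/-- The sum `(z + w, Q z + Q w)` of two points of the graph of `Q`. -/
def sumMap (Q : (Fin d → ℝ) → Fin n → ℝ) (p : (Fin d → ℝ) × (Fin d → ℝ)) :
    (Fin d → ℝ) × (Fin n → ℝ) :=
  (p.1 + p.2, Q p.1 + Q p.2)

lemma extOp_sq (x : Fin (d + n) → ℝ) :
    extOp d n Q f x ^ 2 = ∫ p, phase x (sumMap Q p) * (f p.1 * f p.2)
      ∂((unitCubeMeasure d).prod (unitCubeMeasure d)) := by
  change (∫ ξ, phase x (ξ, Q ξ) * f ξ ∂unitCubeMeasure d) ^ 2 = _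
  rw [sq, ← integral_prod_mul]
  congr with p
  rw [sumMap, ← Prod.mk_add_mk, phase_add]
  ring

lemma extOp_sq_eq_two_nsmul_setIntegral (hQ : Continuous Q) (hf : Integrable f (unitCubeMeasure d))
    (i : Fin d) (x : Fin (d + n) → ℝ) :
    extOp d n Q f x ^ 2 = 2 • ∫ p in {p | p.1 i < p.2 i}, phase x (sumMap Q p) * (f p.1 * f p.2)
      ∂((unitCubeMeasure d).prod (unitCubeMeasure d)) := by
  have hphase : Continuous fun p => phase x (sumMap Q p) :=
    (continuous_phase x).comp (by unfold sumMap; fun_prop)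
  have hphase_norm (p) : ‖phase x (sumMap Q p)‖ ≤ 1 := by
    rw [← toReal_enorm, enorm_phase, ENNReal.toReal_one]
  rw [extOp_sq]
  refine integral_prod_eq_two_nsmul_setIntegral
    (measurableSet_lt (by fun_prop) (by fun_prop)) ?_
    ((hf.mul_prod hf).bdd_mul hphase.aestronglyMeasurable (.of_forall hphase_norm)) fun p => ?_
  · filter_upwards [ae_apply_ne i] with p hp
    exact not_lt.trans hp.symm.le_iff_lt
  · simp only [sumMap, Prod.fst_swap, Prod.snd_swap, add_comm, mul_comm]

/-- The derivative of `sumMap Q` at a pair of points where `Q` has derivatives `A` and `B`. -/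
noncomputable def sumMapDeriv (A B : (Fin d → ℝ) →L[ℝ] (Fin n → ℝ)) :
    (Fin d → ℝ) × (Fin d → ℝ) →L[ℝ] (Fin d → ℝ) × (Fin n → ℝ) :=
  (.fst ℝ _ _ + .snd ℝ _ _ : _ →L[ℝ] _).prod (A ∘L .fst ℝ _ _ + B ∘L .snd ℝ _ _)

lemma hasFDerivAt_sumMap {Q' : (Fin d → ℝ) → (Fin d → ℝ) →L[ℝ] (Fin n → ℝ)}
    (hQ' : ∀ z, HasFDerivAt Q (Q' z) z) (p : (Fin d → ℝ) × (Fin d → ℝ)) :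
    HasFDerivAt (sumMap Q) (sumMapDeriv (Q' p.1) (Q' p.2)) p :=
  (hasFDerivAt_fst.add hasFDerivAt_snd).prodMk
    (((hQ' p.1).comp p hasFDerivAt_fst).add ((hQ' p.2).comp p hasFDerivAt_snd))

lemma det_sumMapDeriv (A B : (Fin d → ℝ) →L[ℝ] (Fin d → ℝ)) :
    (sumMapDeriv A B).det = (B - A).det := by
  let b := Pi.basisFun ℝ (Fin d)
  have : LinearMap.toMatrix (b.prod b) (b.prod b) (sumMapDeriv A B) =
      Matrix.fromBlocks 1 1 (LinearMap.toMatrix b b A) (LinearMap.toMatrix b b B) := by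
    ext (i | i) (j | j) <;>
      simp [sumMapDeriv, LinearMap.toMatrix_apply, Matrix.one_apply, Pi.single_apply, b]
  rw [ContinuousLinearMap.det, ContinuousLinearMap.det, ← LinearMap.det_toMatrix (b.prod b),
    ← LinearMap.det_toMatrix b, this, Matrix.det_fromBlocks_one₁₁]
  simp

theorem lintegral_enorm_extOp_rpow_le {Q : (Fin d → ℝ) → Fin d → ℝ}
    {Q' : (Fin d → ℝ) → (Fin d → ℝ) →L[ℝ] (Fin d → ℝ)} (hQ' : ∀ z, HasFDerivAt Q (Q' z) z)
    {i : Fin d} (hinj : Set.InjOn (sumMap Q) {p | p.1 i < p.2 i})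
    (hdet : ∀ᵐ p ∂(unitCubeMeasure d).prod (unitCubeMeasure d), (Q' p.2 - Q' p.1).det ≠ 0)
    {r s : ℝ} (hrs : r.HolderConjugate s) (hs : 2 < s) (hf : Integrable f (unitCubeMeasure d)) :
    ∫⁻ x, ‖extOp d d Q f x‖ₑ ^ (2 * s) ≤
      2 ^ s * (ENNReal.ofReal (s * (4 * 2 ^ (s - 2) / (s - 2))) *
        (∫⁻ p, ENNReal.ofReal |(Q' p.2 - Q' p.1).det| ^ (1 - r) * ‖f p.1 * f p.2‖ₑ ^ r
          ∂(unitCubeMeasure d).prod (unitCubeMeasure d)) ^ (s - 1)) := by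
  set μ := unitCubeMeasure d
  set S : Set ((Fin d → ℝ) × (Fin d → ℝ)) := {p | p.1 i < p.2 i}
  have hS : MeasurableSet S := measurableSet_lt (by fun_prop) (by fun_prop)
  have hμS : (μ.prod μ).restrict S = volume.restrict (S ∩ Set.Icc 0 1 ×ˢ Set.Icc 0 1) := by
    rw [Measure.prod_restrict, Measure.restrict_restrict hS, Measure.volume_eq_prod]
  have hQ : Continuous Q := continuous_iff_continuousAt.2 fun z => (hQ' z).continuousAt
  have htwo : ‖(2 : ℂ)‖ₑ = 2 := by simp [← ofReal_norm]
  have hsq (x) : ‖extOp d d Q f x‖ₑ ^ (2 * s) =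
      2 ^ s * ‖∫ p in S, phase x (sumMap Q p) * (f p.1 * f p.2) ∂(μ.prod μ)‖ₑ ^ s := by
    rw [ENNReal.rpow_mul, ENNReal.rpow_two, ← enorm_pow,
      extOp_sq_eq_two_nsmul_setIntegral hQ hf i, nsmul_eq_mul, enorm_mul,
      ENNReal.mul_rpow_of_nonneg _ _ (by linarith), Nat.cast_ofNat, htwo]
  have hint := (hf.mul_prod hf).restrict (s := S)
  have hdetS : ∀ᵐ p ∂(μ.prod μ).restrict S, (sumMapDeriv (Q' p.1) (Q' p.2)).det ≠ 0 := by
    simpa only [det_sumMapDeriv] using ae_restrict_of_ae hdet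
  simp only [hsq]
  rw [lintegral_const_mul' _ _ (by finiteness)]
  rw [hμS] at hint hdetS ⊢
  gcongr
  refine (lintegral_enorm_setIntegral_phase_comp_mul_rpow_le hrs hs
    (hS.inter (measurableSet_Icc.prod measurableSet_Icc))
    (fun p _ => (hasFDerivAt_sumMap hQ' p).hasFDerivWithinAt)
    (hinj.mono Set.inter_subset_left) hdetS hint).trans ?_
  rw [← hμS]
  simp only [det_sumMapDeriv]
  gcongr
  · linarith
  · exact Measure.restrict_le_self

lemma ofReal_rpow_neg_le_prod {a : Fin d → ℝ} {b β : ℝ} (hab : ∏ j, |a j| ≤ b) (hβ : 0 ≤ β) :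
    ENNReal.ofReal b ^ (-β) ≤ ∏ j, ENNReal.ofReal |a j| ^ (-β) := by
  rw [ENNReal.prod_rpow_of_ne_top fun _ _ => ENNReal.ofReal_ne_top,
    ← ENNReal.ofReal_prod_of_nonneg fun _ _ => abs_nonneg _, ENNReal.rpow_neg, ENNReal.rpow_neg]
  gcongr

lemma lintegral_rpow_mul_enorm_mul_rpow_le {J : (Fin d → ℝ) × (Fin d → ℝ) → ℝ}
    (hJ : ∀ p, ∏ j, |p.2 j - p.1 j| ≤ J p) {r θ σ : ℝ} (hr : 1 < r) (hθ : r - 1 < θ) (hθ1 : θ ≤ 1)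
    (hσ : σ * (1 - θ / 2) = 1) (hf : AEStronglyMeasurable f (unitCubeMeasure d)) :
    ∫⁻ p, ENNReal.ofReal (J p) ^ (1 - r) * ‖f p.1 * f p.2‖ₑ ^ r
        ∂(unitCubeMeasure d).prod (unitCubeMeasure d) ≤
      (ENNReal.ofReal (2 / (1 - (r - 1) / θ)) ^ d) ^ θ *
        (∫⁻ z, ‖f z‖ₑ ^ (r * σ) ∂unitCubeMeasure d) ^ (2 - θ) := by
  have hθ0 : 0 < θ := by linarith
  let k (p : (Fin d → ℝ) × (Fin d → ℝ)) := ∏ j, ENNReal.ofReal |p.2 j - p.1 j| ^ (-(r - 1))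
  have hkθ (p) : k p ^ (1 / θ) = ∏ j, ENNReal.ofReal |p.2 j - p.1 j| ^ (-((r - 1) / θ)) := by
    rw [← ENNReal.prod_rpow_of_nonneg (by positivity)]
    simp only [← ENNReal.rpow_mul]
    ring_nf
  have hβ : (r - 1) / θ < 1 := (div_lt_one hθ0).2 hθ
  have hfr : AEMeasurable (fun z => ‖f z‖ₑ ^ r) (unitCubeMeasure d) := hf.enorm.pow_const r
  calc ∫⁻ p, ENNReal.ofReal (J p) ^ (1 - r) * ‖f p.1 * f p.2‖ₑ ^ r
        ∂(unitCubeMeasure d).prod (unitCubeMeasure d)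
      ≤ ∫⁻ p, ‖f p.1‖ₑ ^ r * ‖f p.2‖ₑ ^ r * k p
          ∂(unitCubeMeasure d).prod (unitCubeMeasure d) := by
        refine lintegral_mono fun p => ?_
        rw [enorm_mul, ENNReal.mul_rpow_of_nonneg _ _ (by linarith), mul_comm, ← neg_sub]
        gcongr
        exact ofReal_rpow_neg_le_prod (hJ p) (by linarith)
    _ ≤ (ENNReal.ofReal (2 / (1 - (r - 1) / θ)) ^ d) ^ θ *
          ((∫⁻ z, (‖f z‖ₑ ^ r) ^ σ ∂unitCubeMeasure d) *
            ∫⁻ z, (‖f z‖ₑ ^ r) ^ σ ∂unitCubeMeasure d) ^ (1 - θ / 2) := by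
        refine lintegral_mul_mul_kernel_le hfr hfr (by fun_prop) hθ0 hθ1 hσ ?_ ?_ <;>
          filter_upwards [ae_restrict_mem measurableSet_Icc] with z hz
        · simpa only [hkθ] using setLIntegral_Icc_prod_abs_sub_rpow_le hβ hz
        · simpa only [hkθ, abs_sub_comm] using setLIntegral_Icc_prod_abs_sub_rpow_le hβ hz
    _ = _ := by
        simp only [← ENNReal.rpow_mul]
        rw [← sq, ← ENNReal.rpow_two, ← ENNReal.rpow_mul]
        ring_nf

lemma ae_det_sub_ne_zero {Q' : (Fin d → ℝ) → (Fin d → ℝ) →L[ℝ] (Fin d → ℝ)}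
    (hdet : ∀ z w, ∏ j, |w j - z j| ≤ |(Q' w - Q' z).det|) :
    ∀ᵐ p ∂(unitCubeMeasure d).prod (unitCubeMeasure d), (Q' p.2 - Q' p.1).det ≠ 0 := by
  filter_upwards [ae_all_iff.2 ae_apply_ne] with p hp
  refine abs_pos.1 (lt_of_lt_of_le ?_ (hdet p.1 p.2))
  exact Finset.prod_pos fun j _ => abs_pos.2 (sub_ne_zero.2 (hp j).symm)

lemma eLpNorm_extOp_top_le :
    eLpNorm (extOp d n Q f) ⊤ volume ≤ eLpNorm f 1 (unitCubeMeasure d) := by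
  rw [eLpNorm_exponent_top, eLpNorm_one_eq_lintegral_enorm]
  refine essSup_le_of_ae_le _ (.of_forall fun x => ?_)
  calc ‖extOp d n Q f x‖ₑ
      ≤ ∫⁻ ξ, ‖phase x (ξ, Q ξ) * f ξ‖ₑ ∂unitCubeMeasure d := enorm_integral_le_lintegral_enorm _
    _ = ∫⁻ ξ, ‖f ξ‖ₑ ∂unitCubeMeasure d := by simp only [enorm_mul, enorm_phase, one_mul]

lemma exists_kernel_exponents {p : ℝ≥0∞} {r s : ℝ} (hrs : r.HolderConjugate s) (hs : 2 < s)
    (hp : 1 / p + 3 / ENNReal.ofReal (2 * s) < 1) :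
    ∃ θ σ, r - 1 < θ ∧ θ ≤ 1 ∧ σ * (1 - θ / 2) = 1 ∧ ENNReal.ofReal (r * σ) ≤ p := by
  have hr : 0 < r := hrs.pos
  have hr2 : r < 2 := by nlinarith [hrs.symm.sub_one_mul_conj]
  have hptop : p⁻¹ ≠ ⊤ := ((le_add_right le_rfl).trans_lt (one_div p ▸ hp)).ne_top
  obtain ⟨t, ht⟩ : ∃ t, p⁻¹ = ENNReal.ofReal t := ⟨_, (ENNReal.ofReal_toReal hptop).symm⟩
  have hts : t + 3 / (2 * s) < 1 := by
    have h3 : (3 : ℝ≥0∞) = ENNReal.ofReal 3 := by simp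
    rw [one_div, ht, h3, ← ENNReal.ofReal_div_of_pos (by linarith)] at hp
    rw [← ENNReal.ofReal_lt_one]
    exact ENNReal.ofReal_add_le.trans_lt hp
  have ht' : r - 1 < 2 - 2 * r * t := by
    have : r * (3 / (2 * s)) = 3 / 2 * (r - 1) := by
      rw [mul_div_assoc', div_eq_iff (by linarith)]
      linear_combination -3 * hrs.sub_one_mul_conj
    linarith [mul_lt_mul_of_pos_left hts hr, mul_add r t (3 / (2 * s))]
  obtain ⟨θ, hθ, hθ1, hθt⟩ : ∃ θ, r - 1 < θ ∧ θ ≤ 1 ∧ θ ≤ 2 - 2 * r * t :=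
    ⟨min 1 (2 - 2 * r * t), lt_min (by linarith) ht', min_le_left _ _, min_le_right _ _⟩
  have hpos : 0 < 1 - θ / 2 := by linarith
  refine ⟨θ, (1 - θ / 2)⁻¹, hθ, hθ1, inv_mul_cancel₀ hpos.ne', ?_⟩
  rw [← ENNReal.inv_le_inv, ht, ← div_eq_mul_inv, ← ENNReal.ofReal_inv_of_pos (by positivity),
    inv_div]
  exact ENNReal.ofReal_le_ofReal ((le_div_iff₀ hr).2 (by linarith))

/-- The factor bounding `∫ |E f|^{2s}` by a power of `∫ |f|^{rσ}` on `ℝ^d`. It collects the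
Hausdorff–Young constant, the `L^{1/θ}` norm of the kernel `∏ |w_i - z_i|^{-(r-1)}`, and `2^s` for
passing to half of the pairs `(z, w)`. -/
noncomputable def extOpConst (d : ℕ) (r s θ : ℝ) : ℝ≥0∞ :=
  2 ^ s * (ENNReal.ofReal (s * (4 * 2 ^ (s - 2) / (s - 2))) *
    ((ENNReal.ofReal (2 / (1 - (r - 1) / θ)) ^ d) ^ θ) ^ (s - 1))

lemma extOpConst_lt_top {r s θ : ℝ} (hs : 1 ≤ s) (hθ : 0 ≤ θ) : extOpConst d r s θ < ⊤ := by
  have hs1 : 0 ≤ s - 1 := by linarith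
  rw [extOpConst]
  finiteness

variable {Q : (Fin d → ℝ) → Fin d → ℝ} {Q' : (Fin d → ℝ) → (Fin d → ℝ) →L[ℝ] (Fin d → ℝ)}
  {i : Fin d} {r s θ σ : ℝ}

lemma lintegral_enorm_extOp_rpow_le_lintegral_rpow (hQ' : ∀ z, HasFDerivAt Q (Q' z) z)
    (hinj : Set.InjOn (sumMap Q) {p | p.1 i < p.2 i})
    (hdet : ∀ z w, ∏ j, |w j - z j| ≤ |(Q' w - Q' z).det|) (hrs : r.HolderConjugate s)
    (hs : 2 < s) (hθ : r - 1 < θ) (hθ1 : θ ≤ 1) (hσ : σ * (1 - θ / 2) = 1)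
    (hf : Integrable f (unitCubeMeasure d)) :
    ∫⁻ x, ‖extOp d d Q f x‖ₑ ^ (2 * s) ≤ extOpConst d r s θ *
      (∫⁻ z, ‖f z‖ₑ ^ (r * σ) ∂unitCubeMeasure d) ^ ((2 - θ) * (s - 1)) := by
  have hs1 : 0 ≤ s - 1 := by linarith
  calc ∫⁻ x, ‖extOp d d Q f x‖ₑ ^ (2 * s)
      ≤ 2 ^ s * (ENNReal.ofReal (s * (4 * 2 ^ (s - 2) / (s - 2))) *
          ((ENNReal.ofReal (2 / (1 - (r - 1) / θ)) ^ d) ^ θ *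
            (∫⁻ z, ‖f z‖ₑ ^ (r * σ) ∂unitCubeMeasure d) ^ (2 - θ)) ^ (s - 1)) := by
        refine (lintegral_enorm_extOp_rpow_le hQ' hinj (ae_det_sub_ne_zero hdet) hrs hs hf).trans ?_
        gcongr
        exact lintegral_rpow_mul_enorm_mul_rpow_le (fun p => hdet p.1 p.2) hrs.lt hθ hθ1 hσ hf.1
    _ = _ := by
        rw [ENNReal.mul_rpow_of_nonneg _ _ hs1, ← ENNReal.rpow_mul _ (2 - θ), extOpConst]
        simp only [mul_assoc]

theorem eLpNorm_extOp_ofReal_le (hQ' : ∀ z, HasFDerivAt Q (Q' z) z)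
    (hinj : Set.InjOn (sumMap Q) {p | p.1 i < p.2 i})
    (hdet : ∀ z w, ∏ j, |w j - z j| ≤ |(Q' w - Q' z).det|) (hrs : r.HolderConjugate s)
    (hs : 2 < s) (hθ : r - 1 < θ) (hθ1 : θ ≤ 1) (hσ : σ * (1 - θ / 2) = 1)
    (hf : Integrable f (unitCubeMeasure d)) :
    eLpNorm (extOp d d Q f) (ENNReal.ofReal (2 * s)) volume ≤
      extOpConst d r s θ ^ (1 / (2 * s)) *
        eLpNorm f (ENNReal.ofReal (r * σ)) (unitCubeMeasure d) := by
  have hs0 : 0 < 2 * s := by linarith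
  have hσ0 : 0 < σ := pos_of_mul_pos_left (by linarith) (by linarith : 0 ≤ 1 - θ / 2)
  have hrσ : 0 < r * σ := mul_pos hrs.pos hσ0
  have hexp : (2 - θ) * (s - 1) * (1 / (2 * s)) = 1 / (r * σ) := by
    rw [mul_one_div, div_eq_div_iff hs0.ne' hrσ.ne']
    linear_combination (2 - θ) * σ * hrs.symm.sub_one_mul_conj + 2 * s * hσ
  rw [eLpNorm_eq_lintegral_rpow_enorm_toReal (ENNReal.ofReal_pos.2 hs0).ne' ENNReal.ofReal_ne_top,
    eLpNorm_eq_lintegral_rpow_enorm_toReal (ENNReal.ofReal_pos.2 hrσ).ne' ENNReal.ofReal_ne_top,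
    ENNReal.toReal_ofReal hs0.le, ENNReal.toReal_ofReal hrσ.le, ← hexp,
    ENNReal.rpow_mul _ ((2 - θ) * (s - 1)), ← ENNReal.mul_rpow_of_nonneg _ _ (by positivity)]
  gcongr
  exact lintegral_enorm_extOp_rpow_le_lintegral_rpow hQ' hinj hdet hrs hs hθ hθ1 hσ hf

theorem exists_eLpNorm_extOp_le_of_integrable (hQ' : ∀ z, HasFDerivAt Q (Q' z) z)
    (hinj : Set.InjOn (sumMap Q) {p | p.1 i < p.2 i})
    (hdet : ∀ z w, ∏ j, |w j - z j| ≤ |(Q' w - Q' z).det|) {p q : ℝ≥0∞} (hp : 1 ≤ p)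
    (hq : 4 < q) (hpq : 1 / p + 3 / q < 1) :
    ∃ C : ℝ≥0∞, C < ⊤ ∧ ∀ f, Integrable f (unitCubeMeasure d) →
      eLpNorm (extOp d d Q f) q volume ≤ C * eLpNorm f p (unitCubeMeasure d) := by
  rcases eq_or_ne q ⊤ with rfl | hqtop
  · refine ⟨1, ENNReal.one_lt_top, fun f hf => eLpNorm_extOp_top_le.trans ?_⟩
    rw [one_mul]
    exact eLpNorm_le_eLpNorm_of_exponent_le hp hf.1
  · obtain ⟨s, rfl⟩ : ∃ s, q = ENNReal.ofReal (2 * s) :=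
      ⟨q.toReal / 2, by rw [mul_div_cancel₀ _ two_ne_zero, ENNReal.ofReal_toReal hqtop]⟩
    have hs : 2 < s := by
      have := (ENNReal.lt_ofReal_iff_toReal_lt (by simp)).1 hq
      rw [ENNReal.toReal_ofNat] at this
      linarith
    have hrs := (Real.HolderConjugate.conjExponent (by linarith : 1 < s)).symm
    obtain ⟨θ, σ, hθ, hθ1, hσ, hσp⟩ := exists_kernel_exponents hrs hs hpq
    have hC : extOpConst d s.conjExponent s θ < ⊤ :=
      extOpConst_lt_top (by linarith) (by linarith [hrs.lt])
    refine ⟨extOpConst d s.conjExponent s θ ^ (1 / (2 * s)), by finiteness, fun f hf =>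
      (eLpNorm_extOp_ofReal_le hQ' hinj hdet hrs hs hθ hθ1 hσ hf).trans ?_⟩
    gcongr
    exact eLpNorm_le_eLpNorm_of_exponent_le hσp hf.1

end SquaredExtension

section SquareForm

lemma injOn_sumMap {d n : ℕ} {Q : (Fin d → ℝ) → Fin n → ℝ}
    (hQ : ∀ z w, Q (z + w) + Q (w - z) = 2 * (Q z + Q w)) {T : Set (Fin d → ℝ)}
    (hT : T.InjOn Q) : {p | p.2 - p.1 ∈ T}.InjOn (sumMap Q) := by
  intro p hp p' hp' h
  have hadd : p.1 + p.2 = p'.1 + p'.2 := congrArg Prod.fst h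
  have hQadd : Q p.1 + Q p.2 = Q p'.1 + Q p'.2 := congrArg Prod.snd h
  have hsub : p.2 - p.1 = p'.2 - p'.1 := by
    refine hT hp hp' (add_left_cancel (a := Q (p.1 + p.2)) ?_)
    rw [hQ, hadd, hQ, hQadd]
  have hfst : p.1 = p'.1 := by
    ext j
    have haddj := congrFun hadd j
    have hsubj := congrFun hsub j
    simp only [Pi.add_apply, Pi.sub_apply] at haddj hsubj
    linarith
  exact Prod.ext hfst (add_left_cancel (hadd.trans (congrArg (· + p'.2) hfst.symm)))

/-- The pair of forms `(ξ₁ξ₂, ξ₁² - ξ₂²)`, which is `z ↦ z²` on `ℂ` up to a linear change of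
coordinates in the target. -/
def sqForm (ξ : Fin 2 → ℝ) (j : Fin 2) : ℝ :=
  if j = 0 then ξ 0 * ξ 1 else ξ 0 ^ 2 - ξ 1 ^ 2

/-- The derivative of `sqForm` at `z`. -/
noncomputable def sqFormDeriv (z : Fin 2 → ℝ) : (Fin 2 → ℝ) →L[ℝ] (Fin 2 → ℝ) :=
  (Matrix.toLin' !![z 1, z 0; 2 * z 0, -2 * z 1]).toContinuousLinearMap

lemma hasFDerivAt_sqForm (z : Fin 2 → ℝ) : HasFDerivAt sqForm (sqFormDeriv z) z := by
  have (j : Fin 2) := hasFDerivAt_apply (𝕜 := ℝ) j z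
  refine hasFDerivAt_pi'' fun j => ?_
  fin_cases j
  · refine ((this 0).mul (this 1)).congr_fderiv ?_
    ext v
    simp [sqFormDeriv, dotProduct, add_comm]
  · refine (((this 0).pow 2).sub ((this 1).pow 2)).congr_fderiv ?_
    ext v
    simp [sqFormDeriv, dotProduct, sub_eq_add_neg]

lemma prod_abs_sub_le_abs_det_sqFormDeriv (z w : Fin 2 → ℝ) :
    ∏ j, |w j - z j| ≤ |(sqFormDeriv w - sqFormDeriv z).det| := by
  have hdet : (sqFormDeriv w - sqFormDeriv z).det =
      -(2 * ((w 0 - z 0) ^ 2 + (w 1 - z 1) ^ 2)) := by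
    rw [sqFormDeriv, sqFormDeriv, ← map_sub, ← map_sub, ContinuousLinearMap.det,
      LinearMap.coe_toContinuousLinearMap, LinearMap.det_toLin', Matrix.det_fin_two]
    simp only [Matrix.sub_apply, Matrix.of_apply, Matrix.cons_val', Matrix.cons_val_zero,
      Matrix.cons_val_one, Matrix.cons_val_fin_one]
    ring
  rw [hdet, abs_neg, abs_of_nonneg (by positivity), Fin.prod_univ_two, ← sq_abs (w 0 - z 0),
    ← sq_abs (w 1 - z 1)]
  nlinarith [sq_nonneg (|w 0 - z 0| - |w 1 - z 1|)]

lemma sqForm_add_add_sqForm_sub (z w : Fin 2 → ℝ) :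
    sqForm (z + w) + sqForm (w - z) = 2 * (sqForm z + sqForm w) := by
  ext j
  have hval (v : Fin 2 → ℝ) : sqForm v 0 = v 0 * v 1 ∧ sqForm v 1 = v 0 ^ 2 - v 1 ^ 2 := ⟨rfl, rfl⟩
  fin_cases j <;>
    simp only [Fin.zero_eta, Fin.mk_one, Pi.add_apply, Pi.sub_apply, Pi.mul_apply, Pi.ofNat_apply,
      hval] <;>
    ring

lemma injOn_sqForm : {v | 0 < v 0}.InjOn sqForm := by
  intro v hv w hw h
  have hmul : v 0 * v 1 = w 0 * w 1 := congrFun h 0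
  have hsub : v 0 ^ 2 - v 1 ^ 2 = w 0 ^ 2 - w 1 ^ 2 := congrFun h 1
  have hnorm : v 0 ^ 2 + v 1 ^ 2 = w 0 ^ 2 + w 1 ^ 2 := by
    refine (sq_eq_sq₀ (by positivity) (by positivity)).1 ?_
    linear_combination (v 0 ^ 2 - v 1 ^ 2 + w 0 ^ 2 - w 1 ^ 2) * hsub +
      4 * (v 0 * v 1 + w 0 * w 1) * hmul
  have hzero : v 0 = w 0 := (sq_eq_sq₀ (le_of_lt hv) (le_of_lt hw)).1 (by linarith)
  have hone : v 1 = w 1 := mul_left_cancel₀ (ne_of_gt hw) (by rw [← hmul, hzero])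
  ext j
  fin_cases j
  exacts [hzero, hone]

lemma injOn_sumMap_sqForm : {p | p.1 0 < p.2 0}.InjOn (sumMap sqForm) :=
  (injOn_sumMap sqForm_add_add_sqForm_sub injOn_sqForm).mono fun p (hp : p.1 0 < p.2 0) =>
    sub_pos.2 hp

end SquareForm

theorem statement14_general {d : ℕ} {Q : (Fin d → ℝ) → Fin d → ℝ}
    {Q' : (Fin d → ℝ) → (Fin d → ℝ) →L[ℝ] (Fin d → ℝ)} (hQ' : ∀ z, HasFDerivAt Q (Q' z) z)
    {i : Fin d} (hinj : Set.InjOn (sumMap Q) {p | p.1 i < p.2 i})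
    (hdet : ∀ z w, ∏ j, |w j - z j| ≤ |(Q' w - Q' z).det|) {p q : ℝ≥0∞} (hq : 4 < q)
    (hpq : 1 / p + 3 / q < 1) :
    ∃ C : ℝ≥0∞, C < ⊤ ∧ ∀ f : (Fin d → ℝ) → ℂ, AEStronglyMeasurable f (unitCubeMeasure d) →
      eLpNorm (extOp d d Q f) q volume ≤ C * eLpNorm f p (unitCubeMeasure d) := by
  have hp : 1 ≤ p := by
    simpa using ((le_add_right le_rfl).trans_lt hpq).le
  obtain ⟨C, hC, hbound⟩ := exists_eLpNorm_extOp_le_of_integrable hQ' hinj hdet hp hq hpq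
  -- The constant is kept positive so that the bound is trivial when `‖f‖_p = ∞`.
  refine ⟨C + 1, by finiteness, fun f hf => ?_⟩
  by_cases hfp : eLpNorm f p (unitCubeMeasure d) = ⊤
  · simp [hfp]
  · have : MemLp f p (unitCubeMeasure d) := ⟨hf, lt_top_iff_ne_top.2 hfp⟩
    exact (hbound f (this.integrable hp)).trans (by gcongr; exact le_self_add)

/-- restriction estimates for `Q(ξ) = (ξ₁ξ₂, ξ₁² - ξ₂²)` on
`ℝ²` (0-indexed in Lean), in the range `q > 4`, `1/p + 3/q < 1`. -/
theorem statement14 (p q : ℝ≥0∞) (hp : 1 ≤ p) (hq : 1 ≤ q)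
    (hq4 : 4 < q) (hpq : 1 / p + 3 / q < 1) :
    ∃ C : ℝ≥0∞, C < ⊤ ∧
      ∀ f : (Fin 2 → ℝ) → ℂ, Measurable f →
        Function.support f ⊆ Set.Icc 0 1 →
        eLpNorm (extOp 2 2
          (fun ξ j => if j = 0 then ξ 0 * ξ 1 else ξ 0 ^ 2 - ξ 1 ^ 2) f)
          q volume ≤
          C * eLpNorm f p volume := by
  obtain ⟨C, hC, hbound⟩ := statement14_general hasFDerivAt_sqForm injOn_sumMap_sqForm
    prod_abs_sub_le_abs_det_sqFormDeriv hq4 hpq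
  exact ⟨C, hC, fun f hf hsupp =>
    eLpNorm_restrict_eq_of_support_subset (p := p) hsupp ▸ hbound f hf.aestronglyMeasurable⟩
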